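/- Let $(X_1, \ldots, X_n)$ be a multivariate Gaussian vector with mean $\mu$ and nondegenerate covariance matrix $\Sigma$ ($\det \Sigma > 0$). Then $P(\sum_{i=1}^n e^{X_i} > b) = (1 + o(1)) \sum_{i=1}^n P(e^{X_i} > b)$ as $b \to \infty$. -/

import Mathlib

open Real Filter MeasureTheory ProbabilityTheory Matrix

lemma gReal_eq (m : ℝ) {v : NNReal} (hv : v ≠ 0) (s : Set ℝ) :
    (gaussianReal m v).real s = ∫ x in s, gaussianPDFReal m v x := by
  rw [measureReal_def, gaussianReal_apply_eq_integral m hv, ENNReal.toReal_ofReal]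
  exact integral_nonneg fun x => gaussianPDFReal_nonneg _ _ _

lemma pdf_anti (m : ℝ) (v : NNReal) {x y : ℝ} (hx : m ≤ x) (hxy : x ≤ y) :
    gaussianPDFReal m v y ≤ gaussianPDFReal m v x := by
  simp only [gaussianPDFReal_def]
  have : (x - m) ^ 2 ≤ (y - m) ^ 2 := by nlinarith
  gcongr

lemma tail_lower (m : ℝ) {v : NNReal} (hv : v ≠ 0) {x d : ℝ} (hx : m ≤ x) (hd : 0 ≤ d) :
    d * gaussianPDFReal m v (x + d) ≤ (gaussianReal m v).real (Set.Ioi x) := by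
  calc d * gaussianPDFReal m v (x + d)
      ≤ (gaussianReal m v).real (Set.Ioc x (x + d)) := by
        rw [gReal_eq m hv]
        have := setIntegral_ge_of_const_le (μ := volume) (s := Set.Ioc x (x + d))
          (f := gaussianPDFReal m v) (c := gaussianPDFReal m v (x + d)) measurableSet_Ioc
          (by simp) (fun y hy => pdf_anti m v (hx.trans hy.1.le) hy.2)
          (integrable_gaussianPDFReal m v).integrableOn
        simpa [hd] using this
    _ ≤ _ := measureReal_mono (fun y hy => hy.1)

lemma tail_diff (m : ℝ) {v : NNReal} (hv : v ≠ 0) {x e : ℝ} (hx : m ≤ x - e) (he : 0 ≤ e) :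
    (gaussianReal m v).real (Set.Ioi (x - e)) - (gaussianReal m v).real (Set.Ioi x)
      ≤ e * gaussianPDFReal m v (x - e) := by
  have h1 : (gaussianReal m v).real (Set.Ioi (x - e)) ≤
      (gaussianReal m v).real (Set.Ioc (x - e) x) + (gaussianReal m v).real (Set.Ioi x) := by
    rw [← Set.Ioc_union_Ioi_eq_Ioi (show x - e ≤ x by linarith)]
    exact measureReal_union_le _ _
  have h2 : (gaussianReal m v).real (Set.Ioc (x - e) x) ≤ e * gaussianPDFReal m v (x - e) := by
    rw [gReal_eq m hv]
    calc ∫ y in Set.Ioc (x - e) x, gaussianPDFReal m v y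
        ≤ ∫ y in Set.Ioc (x - e) x, gaussianPDFReal m v (x - e) := by
          apply setIntegral_mono_on (integrable_gaussianPDFReal m v).integrableOn
            (integrableOn_const (by simp)) measurableSet_Ioc
          intro y hy
          exact pdf_anti m v hx hy.1.le
      _ = _ := by simp [he]
  linarith

lemma tail_pos (m : ℝ) {v : NNReal} (hv : v ≠ 0) (x : ℝ) :
    0 < (gaussianReal m v).real (Set.Ioi x) := by
  have h := tail_lower m hv (x := max m x) (d := 1) (le_max_left _ _) zero_le_one
  have h2 := gaussianPDFReal_pos m v (max m x + 1) hv
  have h3 : (gaussianReal m v).real (Set.Ioi (max m x)) ≤ (gaussianReal m v).real (Set.Ioi x) :=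
    measureReal_mono (Set.Ioi_subset_Ioi (le_max_right _ _))
  linarith

lemma tail_upper (m : ℝ) {v : NNReal} (hv : v ≠ 0) {x : ℝ} (hx : m ≤ x) :
    (gaussianReal m v).real (Set.Ioi x) ≤ exp (-(x - m) ^ 2 / (2 * v)) := by
  have hv' : (0 : ℝ) < v := by positivity
  have h := measure_ge_le_exp_mul_mgf (X := id) (μ := gaussianReal m v) (t := (x - m) / v) x
    (div_nonneg (by linarith) hv'.le) (integrable_exp_mul_gaussianReal _)
  rw [mgf_id_gaussianReal] at h
  simp only [← Real.exp_add, id] at h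
  have hsub : (gaussianReal m v).real (Set.Ioi x) ≤ (gaussianReal m v).real {y | x ≤ y} :=
    measureReal_mono (show Set.Ioi x ⊆ Set.Ici x from Set.Ioi_subset_Ici_self)
  refine hsub.trans (h.trans (le_of_eq ?_))
  congr 1
  field_simp
  ring

lemma tail_ratio (m : ℝ) {v : NNReal} (hv : v ≠ 0) :
    Tendsto (fun L : ℝ => ((gaussianReal m v).real (Set.Ioi (L - 1 / L ^ 2))
      - (gaussianReal m v).real (Set.Ioi L)) / (gaussianReal m v).real (Set.Ioi L))
      atTop (nhds 0) := by
  have hv' : (0 : ℝ) < v := by positivity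
  set K : ℝ := (2 * |m| + 3) / v with hK
  have hlim : Tendsto (fun L : ℝ => exp K / L) atTop (nhds 0) := tendsto_const_nhds.div_atTop tendsto_id
  refine squeeze_zero' (Eventually.of_forall fun L => ?_) ?_ hlim
  · refine div_nonneg (sub_nonneg.2 (measureReal_mono (Set.Ioi_subset_Ioi ?_))) measureReal_nonneg
    have : 0 ≤ 1 / L ^ 2 := by positivity
    linarith
  filter_upwards [eventually_ge_atTop (|m| + 1)] with L hL
  have hm := le_abs_self m
  have hm0 := abs_nonneg m
  have hm' := neg_abs_le m
  have hL1 : 1 ≤ L := by linarith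
  have hL0 : 0 < L := by linarith
  have he0 : 0 ≤ 1 / L ^ 2 := by positivity
  have he1 : 1 / L ^ 2 ≤ 1 / L := by
    apply one_div_le_one_div_of_le hL0; nlinarith
  have hd1 : 1 / L ≤ 1 := by rw [div_le_one hL0]; exact hL1
  have hpos := tail_pos m hv L
  rw [div_le_iff₀ hpos]
  have hd := tail_diff m hv (x := L) (e := 1 / L ^ 2) (by linarith) he0
  have hl := tail_lower m hv (x := L) (d := 1 / L) (by linarith) (by positivity)
  have hp : gaussianPDFReal m v (L - 1 / L ^ 2) ≤ exp K * gaussianPDFReal m v (L + 1 / L) := by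
    simp only [gaussianPDFReal_def]
    rw [mul_left_comm, ← Real.exp_add]
    gcongr
    rw [hK]
    rw [← sub_nonneg]
    have : (2 * |m| + 3) / (v : ℝ) + -(L + 1 / L - m) ^ 2 / (2 * v) - -(L - 1 / L ^ 2 - m) ^ 2 / (2 * v)
      = (2 * (2 * |m| + 3) - (1 / L + 1 / L ^ 2) * (2 * (L - m) + 1 / L - 1 / L ^ 2)) / (2 * v) := by
      field_simp
      ring
    rw [this]
    apply div_nonneg _ (by positivity)
    have hLL : 1 / L * L = 1 := by field_simp
    have h1 : (1 / L + 1 / L ^ 2) * (2 * (L - m) + 1 / L - 1 / L ^ 2)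
       ≤ (2 * (1 / L)) * (L * (2 * |m| + 3)) := by
      apply mul_le_mul
      · linarith
      · nlinarith
      · linarith
      · positivity
    have h2 : (2 * (1 / L)) * (L * (2 * |m| + 3)) = 2 * (2 * |m| + 3) := by
      field_simp
    linarith
  calc _ ≤ 1 / L ^ 2 * gaussianPDFReal m v (L - 1 / L ^ 2) := hd
    _ ≤ 1 / L ^ 2 * (exp K * gaussianPDFReal m v (L + 1 / L)) := by gcongr
    _ = exp K / L * (1 / L * gaussianPDFReal m v (L + 1 / L)) := by field_simp
    _ ≤ _ := by gcongr

lemma tail_negl (m m' : ℝ) {v v' : NNReal} (hv : v ≠ 0) (hv' : v' ≠ 0) (hlt : (v' : ℝ) < 4 * v)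
    (u : ℝ → ℝ) (hu : Tendsto (fun L => u L / L) atTop (nhds 2)) :
    Tendsto (fun L : ℝ => (gaussianReal m' v').real (Set.Ioi (u L)) /
      (gaussianReal m v).real (Set.Ioi L)) atTop (nhds 0) := by
  have pv : (0 : ℝ) < v := by positivity
  have pv' : (0 : ℝ) < v' := by positivity
  have hid : Tendsto (fun L : ℝ => L) atTop atTop := tendsto_id
  have hc : ∀ c : ℝ, Tendsto (fun L : ℝ => c / L) atTop (nhds 0) := fun c =>
    tendsto_const_nhds.div_atTop tendsto_id
  have hexp : Tendsto (fun L : ℝ => -(u L - m') ^ 2 / (2 * v') + (L + 1 - m) ^ 2 / (2 * v))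
      atTop atBot := by
    have h1 : Tendsto (fun L : ℝ => (-(u L / L - m' / L) ^ 2 / (2 * v')
        + (1 + (1 - m) / L) ^ 2 / (2 * v))) atTop
        (nhds (-((2 : ℝ) - 0) ^ 2 / (2 * (v' : ℝ)) + ((1 : ℝ) + 0) ^ 2 / (2 * (v : ℝ)))) :=
      ((((hu.sub (hc m')).pow 2).neg).div_const _).add
        (((tendsto_const_nhds.add (hc (1 - m))).pow 2).div_const _)
    have hneg : (-((2 : ℝ) - 0) ^ 2 / (2 * (v' : ℝ)) + ((1 : ℝ) + 0) ^ 2 / (2 * (v : ℝ))) < 0 := by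
      rw [div_add_div _ _ (by positivity) (by positivity)]
      apply div_neg_of_neg_of_pos _ (by positivity)
      nlinarith
    have h2 := h1.neg_mul_atTop hneg (hid.atTop_mul_atTop₀ hid)
    refine h2.congr' ?_
    filter_upwards [eventually_gt_atTop 0] with L hL
    field_simp
    ring
  have hlim : Tendsto (fun L : ℝ => √(2 * π * v) * exp (-(u L - m') ^ 2 / (2 * v') + (L + 1 - m) ^ 2 / (2 * v)))
      atTop (nhds 0) := by
    have := (Real.tendsto_exp_atBot.comp hexp).const_mul (√(2 * π * v))
    simpa using this
  have huT : Tendsto u atTop atTop := by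
    have := hu.pos_mul_atTop two_pos hid
    refine this.congr' ?_
    filter_upwards [eventually_gt_atTop 0] with L hL
    field_simp
  refine squeeze_zero' (Eventually.of_forall fun L => by positivity) ?_ hlim
  filter_upwards [eventually_ge_atTop m, huT.eventually_ge_atTop m'] with L hL hL'
  rw [div_le_iff₀ (tail_pos m hv L)]
  have h1 := tail_upper m' hv' hL'
  have h2 := tail_lower m hv hL zero_le_one
  refine h1.trans ?_
  calc _ = √(2 * π * v) * exp (-(u L - m') ^ 2 / (2 * v') + (L + 1 - m) ^ 2 / (2 * v)) *
        (1 * gaussianPDFReal m v (L + 1)) := by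
        simp only [gaussianPDFReal_def]
        have : 0 < √(2 * π * v) := by positivity
        rw [Real.exp_add, neg_div (2 * (v:ℝ)) ((L + 1 - m) ^ 2), Real.exp_neg ((L + 1 - m) ^ 2 / (2 * v))]
        field_simp
    _ ≤ _ := by gcongr

lemma bonferroni {Ω : Type*} [MeasurableSpace Ω] (P : Measure Ω) [IsProbabilityMeasure P] {n : ℕ}
    (A : Fin n → Set Ω) (hA : ∀ i, MeasurableSet (A i)) :
    ∑ i, P.real (A i) ≤ P.real (⋃ i, A i)
      + ∑ i, ∑ j ∈ Finset.univ.erase i, P.real (A i ∩ A j) := by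
  classical
  set B : Fin n → Set Ω := fun i => A i \ ⋃ j ∈ Finset.univ.erase i, A j with hB
  have hBm : ∀ i, MeasurableSet (B i) := fun i =>
    (hA i).diff (Finset.measurableSet_biUnion _ fun j _ => hA j)
  have hdisj : Pairwise (Function.onFun Disjoint B) := by
    intro i j hij
    rw [Function.onFun, Set.disjoint_left]
    rintro ω ⟨h1, _⟩ ⟨_, h4⟩
    apply h4
    simp only [Set.mem_iUnion]
    exact ⟨i, by simp [hij], h1⟩
  have h1 : ∑ i, P.real (B i) ≤ P.real (⋃ i, A i) := by
    rw [← measureReal_iUnion_fintype hdisj hBm]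
    exact measureReal_mono (Set.iUnion_mono fun i => Set.sdiff_subset)
  have h2 : ∀ i, P.real (A i) ≤ P.real (B i)
      + ∑ j ∈ Finset.univ.erase i, P.real (A i ∩ A j) := by
    intro i
    have hs : A i ⊆ B i ∪ ⋃ j ∈ Finset.univ.erase i, (A i ∩ A j) := by
      intro ω hω
      by_cases h : ω ∈ ⋃ j ∈ Finset.univ.erase i, A j
      · right
        simp only [Set.mem_iUnion] at h ⊢
        obtain ⟨j, hj, hj'⟩ := h
        exact ⟨j, hj, hω, hj'⟩
      · exact Or.inl ⟨hω, h⟩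
    refine (measureReal_mono hs).trans ((measureReal_union_le _ _).trans ?_)
    gcongr
    exact measureReal_biUnion_finset_le _ _
  calc _ ≤ ∑ i, (P.real (B i) + ∑ j ∈ Finset.univ.erase i, P.real (A i ∩ A j)) :=
        Finset.sum_le_sum fun i _ => h2 i
    _ = ∑ i, P.real (B i) + ∑ i, ∑ j ∈ Finset.univ.erase i, P.real (A i ∩ A j) :=
        Finset.sum_add_distrib
    _ ≤ _ := by gcongr

/-- the deterministic dichotomy -/
lemma big_jump {n : ℕ} (hn : 1 ≤ n) (x : Fin n → ℝ) (L e : ℝ) (he : 0 < e) (he1 : e ≤ 1)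
    (h : exp L < ∑ i, exp (x i)) :
    (∃ i, L - e < x i) ∨ ∃ i, ∃ j ∈ Finset.univ.erase i,
      2 * L - log n + log (e / (2 * n)) < x i + x j := by
  classical
  by_cases hx : ∃ i, L - e < x i
  · exact Or.inl hx
  right
  push Not at hx
  have hn0 : (0 : ℝ) < n := by exact_mod_cast hn
  obtain ⟨i, -, hi⟩ : ∃ i ∈ Finset.univ, exp L / n < exp (x i) := by
    apply Finset.exists_lt_of_sum_lt (s := (Finset.univ : Finset (Fin n)))
    simp only [Finset.sum_const, Finset.card_univ, Fintype.card_fin, nsmul_eq_mul]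
    rwa [mul_div_cancel₀ _ hn0.ne']
  have hee : exp (-e) ≤ 1 - e / 2 := by
    have h1 : 1 + e ≤ exp e := by linarith [Real.add_one_le_exp e]
    rw [Real.exp_neg]
    have : (exp e)⁻¹ ≤ (1 + e)⁻¹ := inv_anti₀ (by linarith) h1
    refine this.trans ?_
    rw [inv_le_iff_one_le_mul₀ (by linarith)]
    nlinarith
  have hrest : exp L * (e / 2) < ∑ j ∈ Finset.univ.erase i, exp (x j) := by
    have h1 := Finset.add_sum_erase Finset.univ (fun j => exp (x j)) (Finset.mem_univ i)
    have h2 : exp (x i) ≤ exp L * exp (-e) := by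
      rw [← Real.exp_add]; exact Real.exp_le_exp.2 (by linarith [hx i])
    have h3 : exp L * exp (-e) ≤ exp L * (1 - e / 2) := by gcongr
    nlinarith
  obtain ⟨j, hj, hj'⟩ : ∃ j ∈ Finset.univ.erase i, exp L * (e / (2 * n)) < exp (x j) := by
    apply Finset.exists_lt_of_sum_lt
    refine lt_of_le_of_lt ?_ hrest
    simp only [Finset.sum_const, nsmul_eq_mul]
    have hcard : ((Finset.univ.erase i).card : ℝ) ≤ n := by
      have := Finset.card_erase_le (s := (Finset.univ : Finset (Fin n))) (a := i)
      simp only [Finset.card_univ, Fintype.card_fin] at this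
      exact_mod_cast this
    calc _ ≤ (n : ℝ) * (exp L * (e / (2 * n))) := by gcongr
      _ = _ := by field_simp
  refine ⟨i, j, hj, ?_⟩
  have h1 : L - log n < x i := by
    rw [← Real.exp_lt_exp, Real.exp_sub, Real.exp_log hn0]; exact hi
  have h2 : L + log (e / (2 * n)) < x j := by
    rw [← Real.exp_lt_exp, Real.exp_add, Real.exp_log (by positivity)]; exact hj'
  linarith

lemma thr_tendsto (n : ℕ) (hn : 1 ≤ n) :
    Tendsto (fun L : ℝ => (2 * L - log n + log ((1 / L ^ 2) / (2 * n))) / L) atTop (nhds 2) := by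
  have hn0 : (0 : ℝ) < n := by exact_mod_cast hn
  have hlog : Tendsto (fun L : ℝ => log L / L) atTop (nhds 0) :=
    isLittleO_log_id_atTop.tendsto_div_nhds_zero
  have hc : Tendsto (fun L : ℝ => (-log n - log (2 * n)) / L) atTop (nhds 0) :=
    tendsto_const_nhds.div_atTop tendsto_id
  have h := ((tendsto_const_nhds (x := (2 : ℝ))).add hc).add (hlog.const_mul (-2))
  simp only [add_zero, mul_zero] at h
  refine h.congr' ?_
  filter_upwards [eventually_gt_atTop 0] with L hL
  rw [Real.log_div (by positivity) (by positivity), one_div, Real.log_inv, Real.log_pow]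
  field_simp
  push_cast
  ring

open Real Filter MeasureTheory ProbabilityTheory Matrix

theorem stmt11 (n : ℕ) (hn : 1 ≤ n)
    (Ω : Type*) [MeasureSpace Ω] [IsProbabilityMeasure (volume : Measure Ω)]
    (X : Fin n → Ω → ℝ) (hmeas : ∀ i, Measurable (X i))
    (μ : Fin n → ℝ) (S : Matrix (Fin n) (Fin n) ℝ) (hS : S.PosDef)
    (hGauss : ∀ c : Fin n → ℝ,
      Measure.map (fun ω => ∑ i, c i * X i ω) volume
        = gaussianReal (∑ i, c i * μ i) (Real.toNNReal (c ⬝ᵥ S.mulVec c))) :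
    Tendsto (fun b : ℝ =>
        ((volume : Measure Ω) {ω | ∑ i, exp (X i ω) > b}).toReal
          / ∑ i, ((volume : Measure Ω) {ω | exp (X i ω) > b}).toReal)
      atTop (nhds 1) := by
  classical
  set P : Measure Ω := volume with hP
  -- marginals
  have hm1 : ∀ i x, P.real {ω | x < X i ω} =
      (gaussianReal (μ i) (S i i).toNNReal).real (Set.Ioi x) := by
    intro i x
    have h := hGauss (Pi.single i 1)
    have e1 : (fun ω => ∑ k, (Pi.single i (1:ℝ) : Fin n → ℝ) k * X k ω) = X i := by
      ext ω; simp [Pi.single_apply]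
    have e2 : ∑ k, (Pi.single i (1:ℝ) : Fin n → ℝ) k * μ k = μ i := by
      simp [Pi.single_apply]
    have e3 : (Pi.single i (1:ℝ) : Fin n → ℝ) ⬝ᵥ S.mulVec (Pi.single i 1) = S i i := by
      simp
    rw [e1, e2, e3] at h
    rw [← h, map_measureReal_apply (hmeas i) measurableSet_Ioi]
    rfl
  have hm2 : ∀ i j x, P.real {ω | x < X i ω + X j ω} =
      (gaussianReal (μ i + μ j) (S i i + S i j + S j i + S j j).toNNReal).real (Set.Ioi x) := by
    intro i j x
    have h := hGauss (Pi.single i 1 + Pi.single j 1)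
    have e1 : (fun ω => ∑ k, (Pi.single i (1:ℝ) + Pi.single j 1 : Fin n → ℝ) k * X k ω)
        = fun ω => X i ω + X j ω := by
      ext ω; simp [Pi.single_apply, add_mul, Finset.sum_add_distrib]
    have e2 : ∑ k, (Pi.single i (1:ℝ) + Pi.single j 1 : Fin n → ℝ) k * μ k = μ i + μ j := by
      simp [Pi.single_apply, add_mul, Finset.sum_add_distrib]
    have e3 : (Pi.single i (1:ℝ) + Pi.single j 1 : Fin n → ℝ) ⬝ᵥ
        S.mulVec (Pi.single i 1 + Pi.single j 1) = S i i + S i j + S j i + S j j := by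
      simp [Matrix.mulVec_add]; ring
    rw [e1, e2, e3] at h
    rw [← h, map_measureReal_apply (f := fun ω => X i ω + X j ω) ((hmeas i).add (hmeas j)) measurableSet_Ioi]
    rfl
  have hd : ∀ i, 0 < S i i := fun i => hS.diag_pos
  have hdN : ∀ i, (S i i).toNNReal ≠ 0 := fun i => by simpa using hd i
  -- variance facts
  have hv1 : ∀ i j, 0 < S i i + S i j + S j i + S j j := by
    intro i j
    have hne : (Pi.single i (1:ℝ) + Pi.single j 1 : Fin n → ℝ) ≠ 0 := by
      intro h
      have := congrFun h i
      simp only [Pi.add_apply, Pi.single_eq_same, Pi.zero_apply, Pi.single_apply] at this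
      split_ifs at this <;> linarith
    have h := hS.dotProduct_mulVec_pos hne
    simp [Matrix.mulVec_add] at h
    linarith
  have hv2 : ∀ i j, i ≠ j → 0 < S i i - S i j - S j i + S j j := by
    intro i j hij
    have hne : (Pi.single i (1:ℝ) - Pi.single j 1 : Fin n → ℝ) ≠ 0 := by
      intro h
      have := congrFun h i
      simp [Pi.single_apply, hij] at this
    have h := hS.dotProduct_mulVec_pos hne
    simp [Matrix.mulVec_sub] at h
    linarith
  have : Nonempty (Fin n) := ⟨⟨0, hn⟩⟩
  obtain ⟨k, hk⟩ := Finite.exists_max (fun i => S i i)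
  set T : Fin n → ℝ → ℝ := fun i x => P.real {ω | x < X i ω} with hT
  set D : ℝ → ℝ := fun L => ∑ i, T i L with hDdef
  have hTpos : ∀ i L, 0 < T i L := fun i L => by
    simp only [hT]; rw [hm1]; exact tail_pos _ (hdN i) _
  have hDge : ∀ i L, T i L ≤ D L := fun i L =>
    Finset.single_le_sum (f := fun i => T i L) (fun j _ => (hTpos j L).le) (Finset.mem_univ i)
  have hDpos : ∀ L, 0 < D L := fun L => (hTpos k L).trans_le (hDge k L)
  have hpair : ∀ (u : ℝ → ℝ), Tendsto (fun L => u L / L) atTop (nhds 2) → ∀ i j, i ≠ j →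
      Tendsto (fun L => P.real {ω | u L < X i ω + X j ω} / D L) atTop (nhds 0) := by
    intro u hu i j hij
    have h := tail_negl (μ k) (μ i + μ j) (hdN k)
      (v' := (S i i + S i j + S j i + S j j).toNNReal) (by simpa using hv1 i j) (by
        rw [Real.coe_toNNReal _ (hv1 i j).le, Real.coe_toNNReal _ (hd k).le]
        have h1 := hk i
        have h2 := hk j
        have h3 := hv2 i j hij
        linarith) u hu
    refine squeeze_zero (fun L => div_nonneg measureReal_nonneg (hDpos L).le) (fun L => ?_) h
    rw [hm2, ← hm1]
    exact div_le_div_of_nonneg_left measureReal_nonneg (hTpos k L) (hDge k L)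
  have hpairs : ∀ (u : ℝ → ℝ), Tendsto (fun L => u L / L) atTop (nhds 2) →
      Tendsto (fun L => (∑ i, ∑ j ∈ Finset.univ.erase i, P.real {ω | u L < X i ω + X j ω}) / D L)
        atTop (nhds 0) := by
    intro u hu
    simp only [Finset.sum_div]
    have := tendsto_finsetSum (Finset.univ : Finset (Fin n)) (fun i _ =>
      tendsto_finsetSum (Finset.univ.erase i) (fun j hj =>
        hpair u hu i j (Finset.ne_of_mem_erase hj).symm))
    simpa using this
  have hsingle : ∀ i, Tendsto (fun L => (T i (L - 1 / L ^ 2) - T i L) / D L) atTop (nhds 0) := by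
    intro i
    have h := tail_ratio (μ i) (hdN i)
    have hnn : ∀ L, 0 ≤ T i (L - 1 / L ^ 2) - T i L := fun L => by
      refine sub_nonneg.2 (measureReal_mono fun ω hω => ?_)
      have h1 : 0 ≤ 1 / L ^ 2 := by positivity
      simp only [Set.mem_ofPred_eq] at hω ⊢
      linarith
    refine squeeze_zero (fun L => div_nonneg (hnn L) (hDpos L).le) (fun L => ?_) h
    rw [← hm1, ← hm1]
    exact div_le_div_of_nonneg_left (hnn L) (hTpos i L) (hDge i L)
  have hsingles : Tendsto (fun L => (∑ i, T i (L - 1 / L ^ 2)) / D L) atTop (nhds 1) := by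
    have h := (tendsto_finsetSum (Finset.univ : Finset (Fin n)) (fun i _ => hsingle i)).const_add 1
    simp only [Finset.sum_const_zero, add_zero] at h
    refine h.congr fun L => ?_
    rw [← Finset.sum_div, Finset.sum_sub_distrib]
    have := (hDpos L).ne'
    change 1 + (_ - D L) / D L = _
    field_simp
    ring
  -- main squeeze in the variable L
  set N : ℝ → ℝ := fun L => P.real {ω | exp L < ∑ i, exp (X i ω)} with hN
  have hmain : Tendsto (fun L => N L / D L) atTop (nhds 1) := by
    have h2 : Tendsto (fun L : ℝ => 2 * L / L) atTop (nhds 2) := by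
      refine tendsto_const_nhds.congr' ?_
      filter_upwards [eventually_gt_atTop 0] with L hL
      field_simp
    have hlo := (hpairs (fun L => 2 * L) h2).const_sub 1
    have hup := hsingles.add (hpairs _ (thr_tendsto n hn))
    simp only [sub_zero] at hlo
    simp only [add_zero] at hup
    refine tendsto_of_tendsto_of_tendsto_of_le_of_le' hlo hup ?_ ?_
    · refine Eventually.of_forall fun L => ?_
      have hb := bonferroni P (fun i => {ω | L < X i ω})
        (fun i => measurableSet_lt measurable_const (hmeas i))
      have h3 : P.real (⋃ i, {ω | L < X i ω}) ≤ N L := by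
        refine measureReal_mono fun ω hω => ?_
        simp only [Set.mem_iUnion, Set.mem_ofPred_eq] at hω ⊢
        obtain ⟨i, hi⟩ := hω
        exact (Real.exp_lt_exp.2 hi).trans_le
          (Finset.single_le_sum (f := fun i => exp (X i ω)) (fun j _ => (exp_pos _).le)
            (Finset.mem_univ i))
      have h4 : ∑ i, ∑ j ∈ Finset.univ.erase i, P.real ({ω | L < X i ω} ∩ {ω | L < X j ω})
          ≤ ∑ i, ∑ j ∈ Finset.univ.erase i, P.real {ω | 2 * L < X i ω + X j ω} := by
        refine Finset.sum_le_sum fun i _ => Finset.sum_le_sum fun j _ =>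
          measureReal_mono fun ω hω => ?_
        have h5 : L < X i ω := hω.1
        have h6 : L < X j ω := hω.2
        simp only [Set.mem_ofPred_eq]
        linarith
      have hb' : D L ≤ _ := hb
      rw [← div_self (hDpos L).ne', ← sub_div]
      exact div_le_div_of_nonneg_right (by linarith) (hDpos L).le
    · filter_upwards [eventually_ge_atTop 1] with L hL
      rw [← add_div]
      refine div_le_div_of_nonneg_right ?_ (hDpos L).le
      have he1 : 1 / L ^ 2 ≤ 1 := by
        rw [div_le_one (by positivity)]; nlinarith
      have hsub : {ω | exp L < ∑ i, exp (X i ω)} ⊆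
          (⋃ i ∈ (Finset.univ : Finset (Fin n)), {ω | L - 1 / L ^ 2 < X i ω}) ∪
          ⋃ i ∈ (Finset.univ : Finset (Fin n)), ⋃ j ∈ Finset.univ.erase i,
            {ω | 2 * L - log n + log ((1 / L ^ 2) / (2 * n)) < X i ω + X j ω} := by
        intro ω hω
        rcases big_jump hn (fun i => X i ω) L (1 / L ^ 2) (by positivity) he1 hω with
          ⟨i, hi⟩ | ⟨i, j, hj, hij⟩
        · left
          simp only [Set.mem_iUnion]
          exact ⟨i, Finset.mem_univ i, hi⟩
        · right
          simp only [Set.mem_iUnion]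
          exact ⟨i, Finset.mem_univ i, j, hj, hij⟩
      refine (measureReal_mono hsub).trans ((measureReal_union_le _ _).trans ?_)
      refine add_le_add (measureReal_biUnion_finset_le _ _) ?_
      refine (measureReal_biUnion_finset_le _ _).trans ?_
      exact Finset.sum_le_sum fun i _ => measureReal_biUnion_finset_le _ _
  refine (hmain.comp Real.tendsto_log_atTop).congr' ?_
  filter_upwards [eventually_gt_atTop 0] with b hb
  simp only [Function.comp, hN, hDdef, hT, measureReal_def, Real.exp_log hb, gt_iff_lt,
    Real.log_lt_iff_lt_exp hb]
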